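/- Let ν ≥ 1 and let N_ν ∈ M_ν(ℝ) be the nilpotent Jordan block with ones on the superdiagonal and zeros elsewhere. For every constant C ≥ 0 there exists a real skew-symmetric matrix F ∈ M_ν(ℝ) such that for all w = (w₁, …, w_ν) ∈ ℂ^ν: Re ⟨F N_ν w, w⟩ ≥ −|w₁|² + C (|w₂|² + ⋯ + |w_ν|²). -/

import Mathlib

open Matrix

noncomputable section

/-- The `ν × ν` nilpotent Jordan block, with ones on the superdiagonal. -/
def jordanBlock (ν : ℕ) : Matrix (Fin ν) (Fin ν) ℝ :=
  Matrix.of fun i j => if (j : ℕ) = (i : ℕ) + 1 then 1 else 0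

/-- Real matrix mapped to a complex matrix. -/
def cmap {ν : ℕ} (A : Matrix (Fin ν) (Fin ν) ℝ) : Matrix (Fin ν) (Fin ν) ℂ :=
  A.map (fun x => (x : ℂ))

/-!
Number coordinates from `0`, write `N` for the Jordan block and take `F = D Nᵀ - N D` with
`D = diag(a₀, a₁, …)` real. Since `Nᵀ N` is the projection that kills the coordinate `0`,
`Re ⟨F N w, w⟩ = ∑_{i ≥ 1} aᵢ |wᵢ|² - Re ⟨D N w, Nᵀ w⟩`. The subtracted term is at most
`‖D N w‖² + ‖Nᵀ w‖²`, where `‖D N w‖² = ∑_{i ≥ 1} aᵢ₋₁² |wᵢ|²` and `‖Nᵀ w‖ ≤ ‖w‖`. Hence it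
suffices that `aᵢ = C + 1 + aᵢ₋₁²`.
-/

section SkewSymmetrizer

variable {m R : Type*} [Fintype m] [DecidableEq m] [CommRing R]

/-- The skew-symmetric matrix `D Nᵀ - N D` attached to a matrix `N` and the diagonal matrix `D` with
entries `a`. For a Jordan block `N` it is tridiagonal, with subdiagonal entries `a₁, a₂, …`. -/
def skewSymmetrizer (N : Matrix m m R) (a : m → R) : Matrix m m R :=
  diagonal a * Nᵀ - N * diagonal a

lemma transpose_skewSymmetrizer (N : Matrix m m R) (a : m → R) :
    (skewSymmetrizer N a)ᵀ = -skewSymmetrizer N a := by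
  simp [skewSymmetrizer]

lemma le_re_inner_skew_mul {𝕜 : Type*} [RCLike 𝕜] (D N : Matrix m m 𝕜) (w : EuclideanSpace 𝕜 m) :
    RCLike.re (inner 𝕜 (toEuclideanLin (D * Nᴴ * N) w) w) -
        (‖toEuclideanLin (D * N) w‖ ^ 2 + ‖toEuclideanLin Nᴴ w‖ ^ 2) ≤
      RCLike.re (inner 𝕜 (toEuclideanLin ((D * Nᴴ - N * D) * N) w) w) := by
  have move_adjoint : inner 𝕜 (toEuclideanLin (N * D * N) w) w =
      inner 𝕜 (toEuclideanLin (D * N) w) (toEuclideanLin Nᴴ w) := by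
    rw [toEuclideanLin_conjTranspose_eq_adjoint, LinearMap.adjoint_inner_right, Matrix.mul_assoc,
      toLpLin_mul_same, LinearMap.comp_apply]
  have young : RCLike.re (inner 𝕜 (toEuclideanLin (D * N) w) (toEuclideanLin Nᴴ w)) ≤
      ‖toEuclideanLin (D * N) w‖ ^ 2 + ‖toEuclideanLin Nᴴ w‖ ^ 2 :=
    (re_inner_le_norm _ _).trans <| by
      nlinarith [sq_nonneg (‖toEuclideanLin (D * N) w‖ - ‖toEuclideanLin Nᴴ w‖)]
  rw [Matrix.sub_mul, map_sub, LinearMap.sub_apply, inner_sub_left, map_sub, move_adjoint]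
  exact sub_le_sub_left young _

end SkewSymmetrizer

section ComplexMap

variable {ν : ℕ}

lemma cmap_eq_mapMatrix (A : Matrix (Fin ν) (Fin ν) ℝ) :
    cmap A = Complex.ofRealHom.mapMatrix A :=
  rfl

lemma conjTranspose_cmap (A : Matrix (Fin ν) (Fin ν) ℝ) : (cmap A)ᴴ = cmap Aᵀ := by
  ext i j
  simp [cmap]

lemma cmap_diagonal (a : Fin ν → ℝ) : cmap (diagonal a) = diagonal fun i => (a i : ℂ) :=
  diagonal_map Complex.ofReal_zero

lemma cmap_skewSymmetrizer_mul (N : Matrix (Fin ν) (Fin ν) ℝ) (a : Fin ν → ℝ) :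
    cmap (skewSymmetrizer N a * N) =
      (diagonal (fun i => (a i : ℂ)) * (cmap N)ᴴ - cmap N * diagonal fun i => (a i : ℂ)) *
        cmap N := by
  rw [conjTranspose_cmap, ← cmap_diagonal]
  simp only [cmap_eq_mapMatrix, skewSymmetrizer, map_mul, map_sub]

end ComplexMap

section JordanBlock

variable {n : ℕ}

lemma cmap_jordanBlock_mulVec_castSucc (w : Fin (n + 1) → ℂ) (i : Fin n) :
    (cmap (jordanBlock (n + 1)) *ᵥ w) i.castSucc = w i.succ := by
  have row : cmap (jordanBlock (n + 1)) i.castSucc = Pi.single i.succ 1 := by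
    ext j
    simp [cmap, jordanBlock, Pi.single_apply, Fin.ext_iff, apply_ite]
  rw [mulVec, row, single_one_dotProduct]

lemma cmap_jordanBlock_mulVec_last (w : Fin (n + 1) → ℂ) :
    (cmap (jordanBlock (n + 1)) *ᵥ w) (Fin.last n) = 0 := by
  have row : cmap (jordanBlock (n + 1)) (Fin.last n) = 0 := by
    ext j
    simp [cmap, jordanBlock, j.is_lt.ne]
  rw [mulVec, row, zero_dotProduct]

lemma conjTranspose_cmap_jordanBlock_mulVec_succ (w : Fin (n + 1) → ℂ) (i : Fin n) :
    ((cmap (jordanBlock (n + 1)))ᴴ *ᵥ w) i.succ = w i.castSucc := by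
  have row : (cmap (jordanBlock (n + 1)))ᴴ i.succ = Pi.single i.castSucc 1 := by
    ext j
    simp [cmap, jordanBlock, Pi.single_apply, Fin.ext_iff, apply_ite, eq_comm]
  rw [mulVec, row, single_one_dotProduct]

lemma conjTranspose_cmap_jordanBlock_mulVec_zero (w : Fin (n + 1) → ℂ) :
    ((cmap (jordanBlock (n + 1)))ᴴ *ᵥ w) 0 = 0 := by
  have row : (cmap (jordanBlock (n + 1)))ᴴ 0 = 0 := by
    ext j
    simp [cmap, jordanBlock]
  rw [mulVec, row, zero_dotProduct]

lemma norm_sq_conjTranspose_cmap_jordanBlock_le (w : EuclideanSpace ℂ (Fin (n + 1))) :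
    ‖toEuclideanLin (cmap (jordanBlock (n + 1)))ᴴ w‖ ^ 2 ≤ ‖w‖ ^ 2 := by
  rw [EuclideanSpace.norm_sq_eq, EuclideanSpace.norm_sq_eq, Fin.sum_univ_succ,
    Fin.sum_univ_castSucc (fun i => ‖w i‖ ^ 2)]
  simp [conjTranspose_cmap_jordanBlock_mulVec_zero, conjTranspose_cmap_jordanBlock_mulVec_succ]

lemma norm_sq_diagonal_mul_cmap_jordanBlock (a : Fin (n + 1) → ℝ)
    (w : EuclideanSpace ℂ (Fin (n + 1))) :
    ‖toEuclideanLin (diagonal (fun i => (a i : ℂ)) * cmap (jordanBlock (n + 1))) w‖ ^ 2 =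
      ∑ i : Fin n, a i.castSucc ^ 2 * ‖w i.succ‖ ^ 2 := by
  rw [EuclideanSpace.norm_sq_eq, Fin.sum_univ_castSucc]
  simp [mulVec_diagonal, cmap_jordanBlock_mulVec_last,
    cmap_jordanBlock_mulVec_castSucc, mul_pow]

lemma conjTranspose_mul_cmap_jordanBlock :
    (cmap (jordanBlock (n + 1)))ᴴ * cmap (jordanBlock (n + 1)) =
      diagonal (Fin.cons 0 fun _ => 1) := by
  refine ext_of_mulVec_single fun j => funext fun i => ?_
  rw [← mulVec_mulVec, mulVec_diagonal]
  cases i using Fin.cases with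
  | zero => rw [conjTranspose_cmap_jordanBlock_mulVec_zero, Fin.cons_zero, zero_mul]
  | succ i =>
    rw [conjTranspose_cmap_jordanBlock_mulVec_succ, cmap_jordanBlock_mulVec_castSucc,
      Fin.cons_succ, one_mul]

lemma re_inner_diagonal_mul_conjTranspose_mul_cmap_jordanBlock (a : Fin (n + 1) → ℝ)
    (w : EuclideanSpace ℂ (Fin (n + 1))) :
    (inner ℂ (toEuclideanLin (diagonal (fun i => (a i : ℂ)) * (cmap (jordanBlock (n + 1)))ᴴ *
        cmap (jordanBlock (n + 1))) w) w).re =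
      ∑ i : Fin n, a i.succ * ‖w i.succ‖ ^ 2 := by
  have re_mul_conj (c : ℝ) (z : ℂ) : (z * star (c * z)).re = c * ‖z‖ ^ 2 := by
    rw [star_mul', mul_left_comm, Complex.star_def, Complex.conj_ofReal,
      Complex.mul_conj', ← Complex.ofReal_pow, Complex.re_ofReal_mul, Complex.ofReal_re]
  rw [Matrix.mul_assoc, conjTranspose_mul_cmap_jordanBlock, diagonal_mul_diagonal,
    EuclideanSpace.inner_eq_star_dotProduct, dotProduct, Complex.re_sum, Fin.sum_univ_succ]
  simp only [ofLp_toLpLin, toLin'_apply, Pi.star_apply, mulVec_diagonal, Fin.cons_zero,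
    Fin.cons_succ, mul_zero, zero_mul, star_zero, Complex.zero_re, zero_add, mul_one, re_mul_conj]

lemma le_re_inner_skewSymmetrizer_mul_jordanBlock (a : Fin (n + 1) → ℝ)
    (w : EuclideanSpace ℂ (Fin (n + 1))) :
    -‖w 0‖ ^ 2 + ∑ i : Fin n, (a i.succ - a i.castSucc ^ 2 - 1) * ‖w i.succ‖ ^ 2 ≤
      (inner ℂ (toEuclideanLin
        (cmap (skewSymmetrizer (jordanBlock (n + 1)) a * jordanBlock (n + 1))) w) w).re := by
  have skew_bound := le_re_inner_skew_mul (diagonal fun i => (a i : ℂ))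
    (cmap (jordanBlock (n + 1))) w
  have norm_sq_adjoint := norm_sq_conjTranspose_cmap_jordanBlock_le w
  rw [← cmap_skewSymmetrizer_mul, RCLike.re_eq_complex_re,
    re_inner_diagonal_mul_conjTranspose_mul_cmap_jordanBlock,
    norm_sq_diagonal_mul_cmap_jordanBlock] at skew_bound
  rw [EuclideanSpace.norm_sq_eq w, Fin.sum_univ_succ] at norm_sq_adjoint
  simp only [sub_mul, one_mul, Finset.sum_sub_distrib]
  linarith

end JordanBlock

/-- The diagonal entries that make `skewSymmetrizer` satisfy the estimate with constant `C`: each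
one absorbs the square of its predecessor. The initial value is arbitrary. -/
def symmetrizerWeight (C : ℝ) : ℕ → ℝ
  | 0 => 0
  | k + 1 => C + 1 + symmetrizerWeight C k ^ 2

/-- The skew-symmetric part of a Kreiss symmetrizer: for every `C ≥ 0`
there is a real skew-symmetric `F` with
`Re ⟨F N_ν w, w⟩ ≥ −|w₁|² + C (|w₂|² + ⋯ + |w_ν|²)`. -/
theorem exists_skew_symmetrizer (ν : ℕ) (hν : 0 < ν) (C : ℝ) (hC : 0 ≤ C) :
    ∃ F : Matrix (Fin ν) (Fin ν) ℝ, Fᵀ = -F ∧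
      ∀ w : EuclideanSpace ℂ (Fin ν),
        -‖w ⟨0, hν⟩‖ ^ 2 + C * ∑ a ∈ Finset.univ.filter (fun a : Fin ν => (a : ℕ) ≠ 0), ‖w a‖ ^ 2 ≤
          (inner ℂ (Matrix.toEuclideanLin (cmap (F * jordanBlock ν)) w) w : ℂ).re := by
  obtain ⟨n, rfl⟩ := Nat.exists_eq_add_one.mpr hν
  let a : Fin (n + 1) → ℝ := fun i => symmetrizerWeight C i
  have weight_gap (i : Fin n) : a i.succ - a i.castSucc ^ 2 - 1 = C := by
    simp only [a, Fin.val_succ, Fin.val_castSucc, symmetrizerWeight]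
    ring
  refine ⟨skewSymmetrizer (jordanBlock (n + 1)) a, transpose_skewSymmetrizer _ _, fun w => ?_⟩
  have sum_filter_ne_zero :
      ∑ i ∈ Finset.univ.filter (fun i : Fin (n + 1) => (i : ℕ) ≠ 0), ‖w i‖ ^ 2 =
        ∑ i : Fin n, ‖w i.succ‖ ^ 2 := by
    simp [Finset.sum_filter, Fin.sum_univ_succ]
  rw [sum_filter_ne_zero, Finset.mul_sum]
  simpa only [weight_gap, Fin.zero_eta] using le_re_inner_skewSymmetrizer_mul_jordanBlock a w

end
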